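/- arXiv:2206.09348 — 2 statements merged into one kernel-verified Lean document; each statement's English description precedes it below -/
import Mathlib

section
/- For all y, c ∈ R^X, the root class scores satisfy (y − c)_X = y_X + μ^1 · log σ_{c,y}(X), where (y − c)_X and y_X denote the class scores of the root class X for the vectors y − c and y respectively. -/
/-!
The identity is proved in exponential form, for every class `C` of level `l < L`:
`exp ((y - c)_C / μ^(l+1)) = exp (y_C / μ^(l+1)) * σ_{c,y}(C)`.
By definition of the scores, `exp (y_C / μ^(l+1)) = ∑_{C' ⊲ C} exp (y_{C'} / μ^(l+1))`
(`exp_scoreAux_succ`), and likewise for `y - c`. At level `L - 1` the children are singletons and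
the identity is immediate. Higher up, raising the identity for a child `C'`
to the power `μ^(l+2) / μ^(l+1)` turns its summand into
`exp (y_{C'} / μ^(l+1)) * σ_{c,y}(C') ^ (μ^(l+2) / μ^(l+1))`, and factoring out
`exp (y_C / μ^(l+1))` produces the conditional choice probabilities in the recursion for `σ`
(`exp_scoreAux_sub`). Taking logarithms at the root gives the theorem.
-/

noncomputable section

namespace NestedBandits

/-- A similarity structure of depth `L ≥ 1` on a finite set `X`, encoded by the map
`cls l x` = the similarity class of level `l` containing `x`. -/
structure SimStruct (X : Type*) [Fintype X] [DecidableEq X] where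
  L : ℕ
  one_le_L : 1 ≤ L
  cls : ℕ → X → Finset X
  mem_cls : ∀ l x, x ∈ cls l x
  cls_zero : ∀ x, cls 0 x = Finset.univ
  cls_L : ∀ x, cls L x = {x}
  cls_congr : ∀ l x z, z ∈ cls l x → cls l z = cls l x
  cls_refines : ∀ l x, l < L → cls (l + 1) x ⊆ cls l x

variable {X : Type*} [Fintype X] [DecidableEq X]

/-- The probability `p_C` of a class `C`. -/
def pC (p : X → ℝ) (C : Finset X) : ℝ := ∑ x ∈ C, p x

/-- The simplex `Δ(X)` of probability vectors on `X`. -/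
def simplex (X : Type*) [Fintype X] : Set (X → ℝ) :=
  {p | (∀ x, 0 ≤ p x) ∧ ∑ x, p x = 1}

/-- `t * log t`, with the convention `0 * log 0 = 0` (automatic since `Real.log 0 = 0`). -/
def xlogx (t : ℝ) : ℝ := t * Real.log t

/-- Auxiliary class score: `k` is the number of levels below the class (so the class has
level `S.L - k`). -/
def scoreAux (S : SimStruct X) (μ : ℕ → ℝ) (y : X → ℝ) : ℕ → Finset X → ℝ
  | 0, C => ∑ x ∈ C, y x
  | k + 1, C =>
      μ (S.L - k) *
        Real.log (∑ C' ∈ C.image (S.cls (S.L - k)), Real.exp (scoreAux S μ y k C' / μ (S.L - k)))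

/-- The class score `y_C` of a class `C` of level `l`. -/
def score (S : SimStruct X) (μ : ℕ → ℝ) (y : X → ℝ) (l : ℕ) (C : Finset X) : ℝ :=
  scoreAux S μ y (S.L - l) C

/-- The nested choice probability `P_{x | C}(y)` where `C = S.cls l x` is the level-`l`
class of `x`: the product of the conditional choice probabilities along the chain of
classes from `C` down to `{x}`. -/
def condProb (S : SimStruct X) (μ : ℕ → ℝ) (y : X → ℝ) (l : ℕ) (x : X) : ℝ :=
  ∏ l' ∈ Finset.Ico l S.L,
    Real.exp ((score S μ y (l' + 1) (S.cls (l' + 1) x) - score S μ y l' (S.cls l' x)) / μ (l' + 1))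

/-- The nested entropy `h_C(p)` of a class `C` of level `l`. -/
def nestEnt (S : SimStruct X) (μ : ℕ → ℝ) (p : X → ℝ) (l : ℕ) (C : Finset X) : ℝ :=
  ∑ l' ∈ Finset.Icc (max l 1) S.L,
    (μ l' - μ (l' + 1)) * ∑ C' ∈ C.image (S.cls l'), xlogx (pC p C')

/-- The conditional entropy `h(p | C)` of a class `C` of level `l`. -/
def condEnt (S : SimStruct X) (μ : ℕ → ℝ) (p : X → ℝ) (l : ℕ) (C : Finset X) : ℝ :=
  if l < S.L then
    μ (l + 1) * ∑ C' ∈ C.image (S.cls (l + 1)), pC p C' * (Real.log (pC p C') - Real.log (pC p C))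
  else 0

/-- Auxiliary nested power sum: `k = S.L - l ≥ 1` levels below the class. -/
def npsAux (S : SimStruct X) (μ : ℕ → ℝ) (y c : X → ℝ) : ℕ → Finset X → ℝ
  | 0, _ => 0
  | 1, C => ∑ x ∈ C, condProb S μ y (S.L - 1) x * Real.exp (-c x / μ S.L)
  | k + 2, C =>
      ∑ C' ∈ C.image (S.cls (S.L - (k + 1))),
        Real.exp ((score S μ y (S.L - (k + 1)) C' - score S μ y (S.L - (k + 2)) C) /
            μ (S.L - (k + 1))) *
          npsAux S μ y c (k + 1) C' ^ (μ (S.L - k) / μ (S.L - (k + 1)))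

/-- The nested power sum `σ_{c,y}(C)` for a class `C` of level `l < S.L`. -/
def nps (S : SimStruct X) (μ : ℕ → ℝ) (y c : X → ℝ) (l : ℕ) (C : Finset X) : ℝ :=
  npsAux S μ y c (S.L - l) C

/-- The Fenchel coupling `F(p, y) = h(p) + y_X - ⟨y, p⟩`. -/
def fench (S : SimStruct X) (μ : ℕ → ℝ) (p y : X → ℝ) : ℝ :=
  nestEnt S μ p 0 Finset.univ + score S μ y 0 Finset.univ - ∑ x, y x * p x

/-- The effective number of alternatives `N_eff = (∑_l √(N^l) R̄_l)²`. -/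
def Neff (S : SimStruct X) (R : ℕ → Finset X → ℝ) : ℝ :=
  (∑ l ∈ Finset.Icc 1 S.L,
      Real.sqrt ((Finset.univ.image (S.cls l)).card) *
        Real.sqrt ((∑ C ∈ Finset.univ.image (S.cls l), R l C ^ 2) /
          ((Finset.univ.image (S.cls l)).card))) ^ 2

theorem mu_pos (S : SimStruct X) {μ : ℕ → ℝ}
    (hμ_mono : ∀ l : ℕ, 1 ≤ l → l < S.L → μ (l + 1) ≤ μ l)
    (hμ_pos : 0 < μ S.L) {k : ℕ} (hk : k < S.L) : 0 < μ (S.L - k) := by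
  induction k with
  | zero => simpa using hμ_pos
  | succ k ih =>
    have h := hμ_mono (S.L - (k + 1)) (by omega) (by omega)
    rw [show S.L - (k + 1) + 1 = S.L - k by omega] at h
    exact (ih (by omega)).trans_le h

theorem exp_scoreAux_succ (S : SimStruct X) (μ : ℕ → ℝ) (y : X → ℝ) (k : ℕ)
    (hm : 0 < μ (S.L - k)) (C : Finset X) (hC : C.Nonempty) :
    Real.exp (scoreAux S μ y (k + 1) C / μ (S.L - k)) =
      ∑ C' ∈ C.image (S.cls (S.L - k)), Real.exp (scoreAux S μ y k C' / μ (S.L - k)) := by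
  rw [scoreAux, mul_div_cancel_left₀ _ hm.ne', Real.exp_log]
  exact Finset.sum_pos (fun _ _ => Real.exp_pos _) (hC.image _)

/-- The exponential form of the identity, for the class of `x` of level `S.L - (k + 1)`. -/
theorem exp_scoreAux_sub (S : SimStruct X) (μ : ℕ → ℝ)
    (hμ_mono : ∀ l : ℕ, 1 ≤ l → l < S.L → μ (l + 1) ≤ μ l)
    (hμ_pos : 0 < μ S.L) (y c : X → ℝ) (k : ℕ) (hk : k < S.L) (x : X) :
    Real.exp (scoreAux S μ (fun x => y x - c x) (k + 1) (S.cls (S.L - (k + 1)) x) /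
        μ (S.L - k)) =
      Real.exp (scoreAux S μ y (k + 1) (S.cls (S.L - (k + 1)) x) / μ (S.L - k)) *
        npsAux S μ y c (k + 1) (S.cls (S.L - (k + 1)) x) := by
  induction k generalizing x with
  | zero =>
    have hC : (S.cls (S.L - (0 + 1)) x).Nonempty := ⟨x, S.mem_cls _ _⟩
    rw [exp_scoreAux_succ S μ _ 0 (by simpa using hμ_pos) _ hC]
    have himg : S.cls (S.L - 0) = fun z => {z} := funext fun z => S.cls_L z
    rw [himg, Finset.sum_image (fun a _ b _ h => Finset.singleton_injective h), npsAux,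
      Finset.mul_sum]
    refine Finset.sum_congr rfl fun z hz => ?_
    have hL : S.L - 1 + 1 = S.L := Nat.sub_add_cancel S.one_le_L
    -- Only the last choice, of `z` inside its class of level `S.L - 1`, contributes.
    have hcond : condProb S μ y (S.L - 1) z = Real.exp
        ((y z - scoreAux S μ y 1 (S.cls (S.L - (0 + 1)) x)) / μ S.L) := by
      have hI : Finset.Ico (S.L - 1) S.L = {S.L - 1} := by
        ext i; simp only [Finset.mem_Ico, Finset.mem_singleton]; omega
      rw [condProb, hI, Finset.prod_singleton, hL, S.cls_congr _ x z hz, S.cls_L, score, score,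
        Nat.sub_self, Nat.sub_sub_self S.one_le_L]
      simp [scoreAux]
    rw [hcond, ← Real.exp_add, ← Real.exp_add]
    simp only [scoreAux, Finset.sum_singleton, Nat.sub_zero, zero_add]
    congr 1
    ring
  | succ k ih =>
    have hm := mu_pos S hμ_mono hμ_pos hk
    have hm' := mu_pos S hμ_mono hμ_pos (k := k) (by omega)
    have hC : (S.cls (S.L - (k + 1 + 1)) x).Nonempty := ⟨x, S.mem_cls _ _⟩
    rw [exp_scoreAux_succ S μ _ (k + 1) hm _ hC, npsAux, Finset.mul_sum]
    refine Finset.sum_congr rfl fun C' hC' => ?_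
    obtain ⟨z, -, rfl⟩ := Finset.mem_image.1 hC'
    have h := ih (by omega) z
    set C' := S.cls (S.L - (k + 1)) z
    have hn : 0 ≤ npsAux S μ y c (k + 1) C' :=
      (pos_of_mul_pos_right (h ▸ Real.exp_pos _) (Real.exp_pos _).le).le
    -- Raising to the power `r` changes the uncertainty parameter from that of the children of
    -- `C'` to that of `C'`.
    set r := μ (S.L - k) / μ (S.L - (k + 1)) with hr
    have hpow : ∀ t : ℝ, Real.exp (t / μ (S.L - (k + 1))) = Real.exp (t / μ (S.L - k)) ^ r := by
      intro t
      rw [← Real.exp_mul, hr]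
      congr 1
      field_simp
    rw [hpow, h, Real.mul_rpow (Real.exp_pos _).le hn, ← hpow, ← mul_assoc, ← Real.exp_add,
      score, score, Nat.sub_sub_self (by omega : k + 1 ≤ S.L),
      Nat.sub_sub_self (by omega : k + 2 ≤ S.L)]
    congr 2
    ring

theorem stmt4 (S : SimStruct X) (μ : ℕ → ℝ)
    (hμ_mono : ∀ l : ℕ, 1 ≤ l → l < S.L → μ (l + 1) ≤ μ l)
    (hμ_pos : 0 < μ S.L) (hμ_last : μ (S.L + 1) = 0)
    (y c : X → ℝ) :
    score S μ (fun x => y x - c x) 0 Finset.univ =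
      score S μ y 0 Finset.univ + μ 1 * Real.log (nps S μ y c 0 Finset.univ) := by
  obtain ⟨k, hk⟩ : ∃ k, S.L = k + 1 := ⟨S.L - 1, (Nat.sub_add_cancel S.one_le_L).symm⟩
  have h1 : S.L - k = 1 := by omega
  rcases isEmpty_or_nonempty X with hX | ⟨⟨x⟩⟩
  · -- Without alternatives every sum is empty, and `Real.log 0 = 0` makes both sides vanish.
    have hnps : npsAux S μ y c (k + 1) ∅ = 0 := by
      cases k <;> simp [npsAux]
    simp [score, nps, hk, scoreAux, hnps]
  · have h := exp_scoreAux_sub S μ hμ_mono hμ_pos y c k (by omega) x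
    have hm := mu_pos S hμ_mono hμ_pos (k := k) (by omega)
    rw [show S.L - (k + 1) = 0 by omega, S.cls_zero, h1] at h
    rw [h1] at hm
    have hn : 0 < npsAux S μ y c (k + 1) Finset.univ :=
      pos_of_mul_pos_right (h ▸ Real.exp_pos _) (Real.exp_pos _).le
    have hlog := congrArg Real.log h
    rw [Real.log_mul (Real.exp_pos _).ne' hn.ne', Real.log_exp, Real.log_exp] at hlog
    rw [score, score, nps, Nat.sub_zero, hk]
    field_simp at hlog
    linarith

end NestedBandits
end
end

section
/- The Fenchel coupling is positive-definite: F(p, y) ≥ 0 for all p ∈ Δ(X) and y ∈ R^X, with equality if and only if p_x = P_x(y) for all x ∈ X. -/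
/-!
Why the Fenchel coupling is positive-definite. Write `a_C = p_C`. Since `μ^(L+1) = 0` and
`1 * log 1 = 0` at the root, summation by parts (`abel_sum`) turns the total nested entropy into
`∑_l μ^(l+1) ∑_x p_x (log a_{l+1}(x) - log a_l(x))`, where `a_l(x)` is the mass of the level-`l`
class of `x`. The difference `y_X - ⟨y, p⟩` telescopes along the chain of classes of each `x`, and
so `F(p, y)` becomes the sum over levels of `μ^(l+1)` times a conditional Kullback–Leibler
divergence between `p` and the logit choice probabilities (`fench_eq`).

On each class `D` of level `l` that divergence is a sum over the children `C` of terms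
`a log a - a log b - a + b` with `a = p_C` and `b = p_D * P_{C|D}`; the corrections `- a + b`
cancel because the conditional probabilities sum to one (`sum_choice`). Each term is nonnegative,
and vanishes iff `a = b` (`kl_term`). Hence `F ≥ 0`, and `F = 0` iff
`p_C = p_D * P_{C|D}` for every class `D` and child `C`. Multiplying down the chains, this
says `p_x = P_x(y)` for all `x`; the converse comes from summing up the tree (`pC_eq_prod`).
-/

noncomputable section

namespace NestedBandits

variable {X : Type*} [Fintype X] [DecidableEq X]

/-! ### Sums over classes -/

lemma cls_subset (S : SimStruct X) {l : ℕ} (hl : l < S.L) {x z : X} (hz : z ∈ S.cls l x) :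
    S.cls (l + 1) z ⊆ S.cls l x :=
  (S.cls_refines l z hl).trans (S.cls_congr l x z hz).subset

/-- Summing over the level-`m` classes inside a union `D` of such classes, and then inside each
of them, is the same as summing over `D`. -/
lemma sum_classes (S : SimStruct X) (m : ℕ) (D : Finset X) (hD : ∀ z ∈ D, S.cls m z ⊆ D)
    (g : Finset X → ℝ) (f : X → ℝ) (h : ∀ z ∈ D, g (S.cls m z) = ∑ w ∈ S.cls m z, f w) :
    ∑ C ∈ D.image (S.cls m), g C = ∑ z ∈ D, f z := by
  refine Finset.sum_image' f fun z hz => ?_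
  rw [h z hz]
  refine Finset.sum_congr ?_ fun _ _ => rfl
  ext w
  simp only [Finset.mem_filter]
  exact ⟨fun hw => ⟨hD z hz hw, S.cls_congr m z w hw⟩, fun hw => hw.2 ▸ S.mem_cls m w⟩

lemma sum_classes_mul (S : SimStruct X) (p : X → ℝ) (m : ℕ) (D : Finset X)
    (hD : ∀ z ∈ D, S.cls m z ⊆ D) (φ : Finset X → ℝ) :
    ∑ C ∈ D.image (S.cls m), pC p C * φ C = ∑ z ∈ D, p z * φ (S.cls m z) := by
  refine sum_classes S m D hD _ _ fun z _ => ?_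
  rw [pC, Finset.sum_mul]
  exact Finset.sum_congr rfl fun w hw => by rw [S.cls_congr m z w hw]

lemma pC_children (S : SimStruct X) (p : X → ℝ) {l : ℕ} (hl : l < S.L) (x : X) :
    ∑ C ∈ (S.cls l x).image (S.cls (l + 1)), pC p C = pC p (S.cls l x) :=
  sum_classes S (l + 1) _ (fun _ hz => cls_subset S hl hz) _ p fun _ _ => rfl

/-! ### Scores and conditional choice probabilities -/

/-- The conditional choice probability `P_{C|D}(y)` of a child `C` of a class `D` of level `l`. -/
def choice (S : SimStruct X) (μ : ℕ → ℝ) (y : X → ℝ) (l : ℕ) (D C : Finset X) : ℝ :=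
  Real.exp ((score S μ y (l + 1) C - score S μ y l D) / μ (l + 1))

lemma score_L (S : SimStruct X) (μ : ℕ → ℝ) (y : X → ℝ) (x : X) :
    score S μ y S.L (S.cls S.L x) = y x := by
  simp [score, scoreAux, S.cls_L]

lemma score_succ (S : SimStruct X) (μ : ℕ → ℝ) (y : X → ℝ) {l : ℕ} (hl : l < S.L)
    (D : Finset X) :
    score S μ y l D = μ (l + 1) * Real.log (∑ C ∈ D.image (S.cls (l + 1)),
      Real.exp (score S μ y (l + 1) C / μ (l + 1))) := by
  obtain ⟨k, hk⟩ : ∃ k, S.L - l = k + 1 := ⟨S.L - l - 1, by omega⟩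
  have h1 : S.L - (l + 1) = k := by omega
  have h2 : S.L - k = l + 1 := by omega
  simp only [score, hk, h1, scoreAux, h2]

/-- The conditional choice probabilities of the children of a class sum to one: the score of the
class is exactly the log-partition function of the logit choice among its children. -/
lemma sum_choice (S : SimStruct X) (μ : ℕ → ℝ) (y : X → ℝ) {l : ℕ} (hl : l < S.L)
    (hμ : 0 < μ (l + 1)) (x : X) :
    ∑ C ∈ (S.cls l x).image (S.cls (l + 1)), choice S μ y l (S.cls l x) C = 1 := by
  have hpos : 0 < ∑ C ∈ (S.cls l x).image (S.cls (l + 1)),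
      Real.exp (score S μ y (l + 1) C / μ (l + 1)) :=
    Finset.sum_pos (fun _ _ => Real.exp_pos _) (Finset.Nonempty.image ⟨x, S.mem_cls l x⟩ _)
  simp only [choice, sub_div, Real.exp_sub]
  rw [← Finset.sum_div, score_succ S μ y hl (S.cls l x), mul_div_cancel_left₀ _ hμ.ne',
    Real.exp_log hpos, div_self hpos.ne']

/-! ### The divergence at a single level -/

lemma kl_term {a b : ℝ} (ha : 0 ≤ a) (hb : 0 ≤ b) (hab : b = 0 → a = 0) :
    0 ≤ a * (Real.log a - Real.log b) - a + b ∧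
      (a * (Real.log a - Real.log b) - a + b = 0 ↔ a = b) := by
  rcases hb.eq_or_lt with h0 | hb
  · simp [hab h0.symm, ← h0]
  rcases ha.eq_or_lt with h0 | ha
  · simp [← h0, hb.le, eq_comm]
  have hlog : Real.log a - Real.log b = - Real.log (b / a) := by
    rw [Real.log_div hb.ne' ha.ne']; ring
  have hba : a * (b / a) = b := by field_simp
  rw [hlog]
  refine ⟨?_, fun h => ?_, fun h => ?_⟩
  · have := mul_le_mul_of_nonneg_left (Real.log_le_sub_one_of_pos (div_pos hb ha)) ha.le
    linarith
  · by_contra hne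
    have h1 : b / a ≠ 1 := fun h => hne ((div_eq_one_iff_eq ha.ne').1 h).symm
    have := mul_lt_mul_of_pos_left (Real.log_lt_sub_one_of_pos (div_pos hb ha) h1) ha
    linarith
  · subst h
    simp [ha.ne']

/-- The log-likelihood ratio at `z` of the conditional law of `p` on level `l + 1` given level `l`
against the conditional choice probability. -/
def logRatio (S : SimStruct X) (μ : ℕ → ℝ) (p y : X → ℝ) (l : ℕ) (z : X) : ℝ :=
  Real.log (pC p (S.cls (l + 1) z)) - Real.log (pC p (S.cls l z)) -
    (score S μ y (l + 1) (S.cls (l + 1) z) - score S μ y l (S.cls l z)) / μ (l + 1)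

/-- Gibbs' inequality, with its equality case, on one class of level `l`. -/
lemma class_kl (S : SimStruct X) (μ : ℕ → ℝ) (p y : X → ℝ) (hp : ∀ x, 0 ≤ p x) {l : ℕ}
    (hl : l < S.L) (hμ : 0 < μ (l + 1)) (x : X) :
    0 ≤ ∑ z ∈ S.cls l x, p z * logRatio S μ p y l z ∧
      (∑ z ∈ S.cls l x, p z * logRatio S μ p y l z = 0 ↔
        ∀ z ∈ S.cls l x, pC p (S.cls (l + 1) z) =
          pC p (S.cls l z) * choice S μ y l (S.cls l z) (S.cls (l + 1) z)) := by
  set D := S.cls l x with hDdef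
  have hD : ∀ z ∈ D, S.cls (l + 1) z ⊆ D := fun z hz => cls_subset S hl hz
  have hcl : ∀ z ∈ D, S.cls l z = D := fun z hz => S.cls_congr l x z hz
  have hpC : ∀ C, 0 ≤ pC p C := fun C => Finset.sum_nonneg fun z _ => hp z
  set b : Finset X → ℝ := fun C => pC p D * choice S μ y l D C with hb
  have hterm : ∀ C ∈ D.image (S.cls (l + 1)),
      0 ≤ pC p C * (Real.log (pC p C) - Real.log (b C)) - pC p C + b C ∧
      (pC p C * (Real.log (pC p C) - Real.log (b C)) - pC p C + b C = 0 ↔ pC p C = b C) := by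
    intro C hC
    obtain ⟨z, hz, rfl⟩ := Finset.mem_image.1 hC
    refine kl_term (hpC _) (mul_nonneg (hpC _) (Real.exp_pos _).le) fun h => ?_
    have hD0 : pC p D = 0 := (mul_eq_zero.1 h).resolve_right (Real.exp_pos _).ne'
    exact le_antisymm
      ((Finset.sum_le_sum_of_subset_of_nonneg (hD z hz) fun w _ _ => hp w).trans_eq hD0) (hpC _)
  have hsum : ∑ z ∈ D, p z * logRatio S μ p y l z = ∑ C ∈ D.image (S.cls (l + 1)),
      (pC p C * (Real.log (pC p C) - Real.log (b C)) - pC p C + b C) := by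
    rw [Finset.sum_add_distrib, Finset.sum_sub_distrib, pC_children S p hl x, hb,
      ← Finset.mul_sum, sum_choice S μ y hl hμ x, mul_one, sub_add_cancel,
      sum_classes_mul S p (l + 1) D hD]
    refine Finset.sum_congr rfl fun z hz => ?_
    rcases (hp z).eq_or_lt with h0 | h0
    · simp [← h0]
    have hD0 : pC p D ≠ 0 :=
      (h0.trans_le (Finset.single_le_sum (fun w _ => hp w) hz)).ne'
    simp only [choice, logRatio, hcl z hz]
    rw [Real.log_mul hD0 (Real.exp_pos _).ne', Real.log_exp]
    ring
  rw [hsum]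
  refine ⟨Finset.sum_nonneg fun C hC => (hterm C hC).1, ?_⟩
  rw [Finset.sum_eq_zero_iff_of_nonneg fun C hC => (hterm C hC).1]
  constructor
  · intro h z hz
    have hm := Finset.mem_image_of_mem (S.cls (l + 1)) hz
    rw [hcl z hz]
    exact (hterm _ hm).2.1 (h _ hm)
  · intro h C hC
    refine (hterm C hC).2.2 ?_
    obtain ⟨z, hz, rfl⟩ := Finset.mem_image.1 hC
    rw [h z hz, hcl z hz]

/-- Gibbs' inequality, with its equality case, on a whole level. -/
lemma level_kl (S : SimStruct X) (μ : ℕ → ℝ) (p y : X → ℝ) (hp : ∀ x, 0 ≤ p x) {l : ℕ}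
    (hl : l < S.L) (hμ : 0 < μ (l + 1)) :
    0 ≤ ∑ z, p z * logRatio S μ p y l z ∧
      (∑ z, p z * logRatio S μ p y l z = 0 ↔
        ∀ z, pC p (S.cls (l + 1) z) =
          pC p (S.cls l z) * choice S μ y l (S.cls l z) (S.cls (l + 1) z)) := by
  have hsum := sum_classes S l Finset.univ (fun _ _ => Finset.subset_univ _)
    (fun D => ∑ z ∈ D, p z * logRatio S μ p y l z) _ fun _ _ => rfl
  have hnn : ∀ D ∈ Finset.univ.image (S.cls l),
      0 ≤ ∑ z ∈ D, p z * logRatio S μ p y l z := by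
    intro D hD
    obtain ⟨x, -, rfl⟩ := Finset.mem_image.1 hD
    exact (class_kl S μ p y hp hl hμ x).1
  rw [← hsum]
  refine ⟨Finset.sum_nonneg hnn, ?_⟩
  rw [Finset.sum_eq_zero_iff_of_nonneg hnn]
  constructor
  · intro h z
    exact (class_kl S μ p y hp hl hμ z).2.1
      (h _ (Finset.mem_image_of_mem _ (Finset.mem_univ z))) z (S.mem_cls l z)
  · intro h D hD
    obtain ⟨x, -, rfl⟩ := Finset.mem_image.1 hD
    exact (class_kl S μ p y hp hl hμ x).2.2 fun z _ => h z

/-! ### Decomposition of the Fenchel coupling over the levels -/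

lemma abel_sum (μ E : ℕ → ℝ) (n : ℕ) :
    ∑ i ∈ Finset.range n, (μ (i + 1) - μ (i + 1 + 1)) * E (i + 1) =
      ∑ i ∈ Finset.range n, μ (i + 1) * (E (i + 1) - E i) - μ (n + 1) * E n + μ 1 * E 0 := by
  induction n with
  | zero => simp
  | succ n ih => rw [Finset.sum_range_succ, Finset.sum_range_succ, ih]; ring

lemma fench_eq (S : SimStruct X) (μ : ℕ → ℝ) (p y : X → ℝ) (hp : p ∈ simplex X)
    (hμ : ∀ l < S.L, 0 < μ (l + 1)) (hμ_last : μ (S.L + 1) = 0) :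
    fench S μ p y = ∑ l ∈ Finset.range S.L, μ (l + 1) * ∑ z, p z * logRatio S μ p y l z := by
  have hroot : ∀ x, pC p (S.cls 0 x) = 1 := fun x => by rw [S.cls_zero]; exact hp.2
  set E : ℕ → ℝ := fun l => ∑ z, p z * Real.log (pC p (S.cls l z)) with hE
  have hE0 : E 0 = 0 := by simp [hE, hroot]
  have hent : nestEnt S μ p 0 Finset.univ =
      ∑ l ∈ Finset.range S.L, μ (l + 1) * (E (l + 1) - E l) := by
    have h1 : nestEnt S μ p 0 Finset.univ =
        ∑ l ∈ Finset.range S.L, (μ (l + 1) - μ (l + 1 + 1)) * E (l + 1) := by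
      have hI : Finset.Icc (max 0 1) S.L = Finset.Ico (0 + 1) (S.L + 1) := by
        ext; simp [Finset.mem_Icc, Finset.mem_Ico]
      rw [nestEnt, hI, ← Finset.sum_Ico_add' (fun l => (μ l - μ (l + 1)) *
        ∑ C ∈ Finset.univ.image (S.cls l), xlogx (pC p C)) 0 S.L 1, Finset.range_eq_Ico]
      refine Finset.sum_congr rfl fun l _ => ?_
      rw [hE]
      exact congrArg _ (sum_classes_mul S p (l + 1) Finset.univ
        (fun _ _ => Finset.subset_univ _) fun C => Real.log (pC p C))
    rw [h1, abel_sum, hμ_last, hE0]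
    ring
  set s : ℕ → X → ℝ := fun l z => score S μ y l (S.cls l z) with hs
  have hscore : score S μ y 0 Finset.univ - ∑ x, y x * p x =
      -∑ l ∈ Finset.range S.L, ∑ z, p z * (s (l + 1) z - s l z) := by
    rw [Finset.sum_comm]
    have h1 : ∀ z, p z * (s S.L z - s 0 z) =
        y z * p z - p z * score S μ y 0 Finset.univ := by
      intro z
      simp only [hs, score_L, S.cls_zero]
      ring
    have h2 : ∀ z, ∑ l ∈ Finset.range S.L, p z * (s (l + 1) z - s l z) =
        y z * p z - p z * score S μ y 0 Finset.univ := fun z => by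
      rw [← Finset.mul_sum, Finset.sum_range_sub fun l => s l z, h1]
    simp only [h2, Finset.sum_sub_distrib, ← Finset.sum_mul, hp.2]
    ring
  rw [fench, add_sub_assoc, hent, hscore, ← sub_eq_add_neg, ← Finset.sum_sub_distrib]
  refine Finset.sum_congr rfl fun l hl => ?_
  have hne := (hμ l (Finset.mem_range.1 hl)).ne'
  simp only [hE]
  rw [← Finset.sum_sub_distrib, Finset.mul_sum, Finset.mul_sum, ← Finset.sum_sub_distrib]
  refine Finset.sum_congr rfl fun z _ => ?_
  simp only [logRatio, hs]
  field_simp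

/-! ### From conditional to unconditional choice probabilities -/

lemma condProb_eq (S : SimStruct X) (μ : ℕ → ℝ) (y : X → ℝ) (x : X) :
    condProb S μ y 0 x =
      ∏ l ∈ Finset.range S.L, choice S μ y l (S.cls l x) (S.cls (l + 1) x) := by
  rw [condProb, Finset.range_eq_Ico]
  rfl

/-- If `p` is the nested choice law, the mass of every class is the product of the
conditional choice probabilities from the root down to it. The induction runs from the leaves
upwards, on the number `k` of levels below the class. -/
lemma pC_eq_prod (S : SimStruct X) (μ : ℕ → ℝ) (p y : X → ℝ)
    (hμ : ∀ l < S.L, 0 < μ (l + 1)) (h : ∀ x, p x = condProb S μ y 0 x) (k : ℕ) :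
    ∀ l, l + k = S.L → ∀ x, pC p (S.cls l x) =
      ∏ i ∈ Finset.range l, choice S μ y i (S.cls i x) (S.cls (i + 1) x) := by
  induction k with
  | zero =>
    rintro l hl x
    obtain rfl : l = S.L := by omega
    rw [← condProb_eq, ← h, S.cls_L, pC, Finset.sum_singleton]
  | succ k ih =>
    intro l hl x
    have hlL : l < S.L := by omega
    -- Members of a common class of level `l` have the same ancestors.
    have hanc : ∀ i ≤ l, ∀ z ∈ S.cls l x, S.cls i z = S.cls i x := by
      intro i hi z hz
      induction hi using Nat.decreasingInduction with
      | self => exact S.cls_congr l x z hz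
      | of_succ j hj hij =>
        refine S.cls_congr j x z (S.cls_refines j x (by omega) ?_)
        rw [← hij]
        exact S.mem_cls _ z
    rw [← pC_children S p hlL x, ← mul_one (∏ i ∈ Finset.range l, _),
      ← sum_choice S μ y hlL (hμ l hlL) x, Finset.mul_sum]
    refine Finset.sum_congr rfl fun C hC => ?_
    obtain ⟨z, hz, rfl⟩ := Finset.mem_image.1 hC
    rw [ih (l + 1) (by omega) z, Finset.prod_range_succ, hanc l le_rfl z hz]
    congr 1
    refine Finset.prod_congr rfl fun i hi => ?_
    have hi := Finset.mem_range.1 hi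
    rw [hanc i hi.le z hz, hanc (i + 1) hi z hz]

theorem stmt10 (S : SimStruct X) (μ : ℕ → ℝ)
    (hμ_mono : ∀ l : ℕ, 1 ≤ l → l < S.L → μ (l + 1) ≤ μ l)
    (hμ_pos : 0 < μ S.L) (hμ_last : μ (S.L + 1) = 0) :
    ∀ p ∈ simplex X, ∀ y : X → ℝ,
      0 ≤ fench S μ p y ∧ (fench S μ p y = 0 ↔ ∀ x, p x = condProb S μ y 0 x) := by
  intro p hp y
  have hμ : ∀ l < S.L, 0 < μ (l + 1) := by
    have hpos : ∀ m ≤ S.L, 1 ≤ m → 0 < μ m := by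
      intro m hm
      induction hm using Nat.decreasingInduction with
      | self => exact fun _ => hμ_pos
      | of_succ j hj ih => exact fun h1 => (ih (by omega)).trans_le (hμ_mono j h1 hj)
    exact fun l hl => hpos (l + 1) hl (by omega)
  have hnn : ∀ l ∈ Finset.range S.L, 0 ≤ μ (l + 1) * ∑ z, p z * logRatio S μ p y l z :=
    fun l hl => mul_nonneg (hμ l (Finset.mem_range.1 hl)).le
      (level_kl S μ p y hp.1 (Finset.mem_range.1 hl) (hμ l (Finset.mem_range.1 hl))).1
  rw [fench_eq S μ p y hp hμ hμ_last]
  refine ⟨Finset.sum_nonneg hnn, ?_⟩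
  rw [Finset.sum_eq_zero_iff_of_nonneg hnn]
  constructor
  · intro h x
    have hstep : ∀ l < S.L, pC p (S.cls (l + 1) x) =
        pC p (S.cls l x) * choice S μ y l (S.cls l x) (S.cls (l + 1) x) := fun l hl =>
      (level_kl S μ p y hp.1 hl (hμ l hl)).2.1
        ((mul_eq_zero.1 (h l (Finset.mem_range.2 hl))).resolve_left (hμ l hl).ne') x
    have hprod : ∀ l ≤ S.L, pC p (S.cls l x) =
        ∏ i ∈ Finset.range l, choice S μ y i (S.cls i x) (S.cls (i + 1) x) := by
      intro l
      induction l with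
      | zero => intro _; rw [S.cls_zero]; simpa [pC] using hp.2
      | succ l ih => intro hl; rw [hstep l hl, ih (by omega), Finset.prod_range_succ]
    rw [condProb_eq, ← hprod S.L le_rfl, S.cls_L, pC, Finset.sum_singleton]
  · intro h l hl
    have hl := Finset.mem_range.1 hl
    refine mul_eq_zero_of_right _ ((level_kl S μ p y hp.1 hl (hμ l hl)).2.2 fun z => ?_)
    rw [pC_eq_prod S μ p y hμ h (S.L - (l + 1)) (l + 1) (by omega) z,
      pC_eq_prod S μ p y hμ h (S.L - l) l (by omega) z, Finset.prod_range_succ]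

end NestedBandits
end
end
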